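/- arXiv:0909.0843 — 6 statements merged into one kernel-verified Lean document; each statement's English description precedes it below -/
import Mathlib

section
/- Let A and B be finite nonempty types and let p be a probability mass function on A × B × {1,2} (a discrete random vector (X1, X2, X3) with X3 binary). If X1 ⊥ X2 (marginal independence of the first two coordinates) and X1 ⊥ X2 | X3 (conditional independence of the first two coordinates given the third), then either X1 ⊥ (X2, X3) or X2 ⊥ (X1, X3). -/
/-!
By the law of total covariance, the covariance of the indicators of `X1 = a` and `X2 = b` is the
mean of their conditional covariances given `X3` plus the covariance of their conditional means.
The hypotheses kill the first two, hence also the third; as `X3` is binary, that one is proportional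
to the product of the covariances of the two indicators with the indicator of `X3 = 0`. So one of
`X1`, `X2` is independent of `X3`, and by contraction, independent of `X3` and the other variable
jointly.

Contraction cancels `p₃(c)`. As signed weights are allowed, `p₃(c) = 0` does not mean that every
`p(a, b, c)` vanishes, but there is at most one such `c`, and marginal independence determines the
weights on it from the others.
-/

open Finset

section Marginals

variable {A B C R : Type*} [AddCommMonoid R]

/-- The marginal `p₁` of the first coordinate. -/
def marginal₁ [Fintype B] [Fintype C] (p : A × B × C → R) (a : A) : R := ∑ b, ∑ c, p (a, b, c)

/-- The marginal `p₂` of the second coordinate. -/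
def marginal₂ [Fintype A] [Fintype C] (p : A × B × C → R) (b : B) : R := ∑ a, ∑ c, p (a, b, c)

/-- The marginal `p₃` of the third coordinate. -/
def marginal₃ [Fintype A] [Fintype B] (p : A × B × C → R) (c : C) : R := ∑ a, ∑ b, p (a, b, c)

/-- The joint marginal `p₁₂` of the first two coordinates. -/
def marginal₁₂ [Fintype C] (p : A × B × C → R) (a : A) (b : B) : R := ∑ c, p (a, b, c)

/-- The joint marginal `p₁₃` of the first and third coordinates. -/
def marginal₁₃ [Fintype B] (p : A × B × C → R) (a : A) (c : C) : R := ∑ b, p (a, b, c)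

/-- The joint marginal `p₂₃` of the last two coordinates. -/
def marginal₂₃ [Fintype A] (p : A × B × C → R) (b : B) (c : C) : R := ∑ a, p (a, b, c)

/-- The weights of `(X2, X1, X3)`, when `p` gives those of `(X1, X2, X3)`. It exchanges the roles
of the first two coordinates in every notion below. -/
def swap₁₂ (p : A × B × C → R) : B × A × C → R := fun s ↦ p (s.2.1, s.1, s.2.2)

theorem sum_marginal₁₃ [Fintype B] [Fintype C] (p : A × B × C → R) (a : A) :
    ∑ c, marginal₁₃ p a c = marginal₁ p a :=
  sum_comm

theorem sum_marginal₂₃ [Fintype A] [Fintype C] (p : A × B × C → R) (b : B) :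
    ∑ c, marginal₂₃ p b c = marginal₂ p b :=
  sum_comm

theorem sum_marginal₃ [Fintype A] [Fintype B] [Fintype C] (p : A × B × C → R) :
    ∑ c, marginal₃ p c = ∑ s, p s := by
  simp only [marginal₃, Fintype.sum_prod_type]
  rw [sum_comm]
  exact sum_congr rfl fun _ _ ↦ sum_comm

theorem marginal₃_swap₁₂ [Fintype A] [Fintype B] (p : A × B × C → R) :
    marginal₃ (swap₁₂ p) = marginal₃ p :=
  funext fun _ ↦ sum_comm

theorem sum_swap₁₂ [Fintype A] [Fintype B] [Fintype C] (p : A × B × C → R) :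
    ∑ s, swap₁₂ p s = ∑ s, p s := by
  rw [← sum_marginal₃, marginal₃_swap₁₂, sum_marginal₃]

end Marginals

section Independence

variable {A B C R : Type*} [Fintype A] [Fintype B]

section CommSemiring

variable [CommSemiring R]

/-- Marginal independence `X1 ⊥ X2`. -/
def Indep₁₂ [Fintype C] (p : A × B × C → R) : Prop :=
  ∀ a b, marginal₁₂ p a b = marginal₁ p a * marginal₂ p b

/-- Marginal independence `X1 ⊥ X3`. -/
def Indep₁₃ [Fintype C] (p : A × B × C → R) : Prop :=
  ∀ a c, marginal₁₃ p a c = marginal₁ p a * marginal₃ p c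

/-- Joint independence `X1 ⊥ (X2, X3)`. -/
def Indep₁_₂₃ [Fintype C] (p : A × B × C → R) : Prop :=
  ∀ a b c, p (a, b, c) = marginal₁ p a * marginal₂₃ p b c

/-- Conditional independence `X1 ⊥ X2 | X3`, in the form that avoids dividing by `p₃`. -/
def CondIndep₁₂ (p : A × B × C → R) : Prop :=
  ∀ a b c, p (a, b, c) * marginal₃ p c = marginal₁₃ p a c * marginal₂₃ p b c

theorem Indep₁₂.swap [Fintype C] {p : A × B × C → R} (h : Indep₁₂ p) : Indep₁₂ (swap₁₂ p) :=
  fun b a ↦ (h a b).trans (mul_comm _ _)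

theorem CondIndep₁₂.swap {p : A × B × C → R} (h : CondIndep₁₂ p) : CondIndep₁₂ (swap₁₂ p) := by
  intro b a c
  rw [marginal₃_swap₁₂]
  exact (h a b c).trans (mul_comm _ _)

theorem Indep₁₃.apply_eq_of_condIndep₁₂ [IsCancelMulZero R] [Fintype C] {p : A × B × C → R}
    (h₁₃ : Indep₁₃ p) (hcond : CondIndep₁₂ p) {c : C} (hc : marginal₃ p c ≠ 0) (a : A) (b : B) :
    p (a, b, c) = marginal₁ p a * marginal₂₃ p b c := by
  apply mul_right_cancel₀ hc
  rw [hcond, h₁₃, mul_right_comm]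

theorem Indep₁₂.apply_eq_of_forall_ne [IsCancelAdd R] [Fintype C] {p : A × B × C → R}
    (h₁₂ : Indep₁₂ p) {a : A} {b : B} {c : C}
    (h : ∀ d ≠ c, p (a, b, d) = marginal₁ p a * marginal₂₃ p b d) :
    p (a, b, c) = marginal₁ p a * marginal₂₃ p b c := by
  classical
  have hsum : ∑ d, p (a, b, d) = ∑ d, marginal₁ p a * marginal₂₃ p b d := by
    rw [← mul_sum, sum_marginal₂₃]
    exact h₁₂ a b
  rw [Fintype.sum_eq_add_sum_compl c, Fintype.sum_eq_add_sum_compl c,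
    sum_congr rfl fun d hd ↦ h d (by simpa using hd)] at hsum
  exact add_right_cancel hsum

theorem Indep₁₃.indep₁_₂₃ [IsCancelMulZero R] [IsCancelAdd R] [Fintype C] {p : A × B × C → R}
    (h₁₃ : Indep₁₃ p) (h₁₂ : Indep₁₂ p) (hcond : CondIndep₁₂ p)
    (hnull : {c | marginal₃ p c = 0}.Subsingleton) : Indep₁_₂₃ p := by
  intro a b c
  by_cases hc : marginal₃ p c = 0
  · exact h₁₂.apply_eq_of_forall_ne fun d hdc ↦
      h₁₃.apply_eq_of_condIndep₁₂ hcond (fun hd ↦ hdc (hnull hd hc)) a b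
  · exact h₁₃.apply_eq_of_condIndep₁₂ hcond hc a b

end CommSemiring

variable [CommRing R]

/-- The covariance of the indicators of `X1 = a` and `X3 = c`, for weights of total mass `1`. -/
def cov₁₃ [Fintype C] (p : A × B × C → R) (a : A) (c : C) : R :=
  marginal₁₃ p a c - marginal₁ p a * marginal₃ p c

theorem indep₁₃_iff_cov₁₃_eq_zero [Fintype C] {p : A × B × C → R} :
    Indep₁₃ p ↔ ∀ a c, cov₁₃ p a c = 0 :=
  forall₂_congr fun _ _ ↦ sub_eq_zero.symm

end Independence

section Binary

variable {A B R : Type*} [Fintype A] [Fintype B] {p : A × B × Fin 2 → R}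

theorem marginal₃_zero_add_one [Semiring R] (hp : ∑ s, p s = 1) :
    marginal₃ p 0 + marginal₃ p 1 = 1 := by
  rw [← Fin.sum_univ_two, sum_marginal₃, hp]

theorem subsingleton_marginal₃_eq_zero [Semiring R] [Nontrivial R] (hp : ∑ s, p s = 1) :
    {c | marginal₃ p c = 0}.Subsingleton := by
  have hne : ¬(marginal₃ p 0 = 0 ∧ marginal₃ p 1 = 0) := fun ⟨h0, h1⟩ ↦ by
    simpa [h0, h1] using marginal₃_zero_add_one hp
  simp only [Set.Subsingleton, Set.mem_ofPred_eq, Fin.forall_fin_two]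
  tauto

variable [CommRing R]

theorem cov₁₃_one (hp : ∑ s, p s = 1) (a : A) : cov₁₃ p a 1 = -cov₁₃ p a 0 := by
  have hmass := marginal₃_zero_add_one hp
  simp only [cov₁₃, ← sum_marginal₁₃, Fin.sum_univ_two]
  linear_combination -(marginal₁₃ p a 0 + marginal₁₃ p a 1) * hmass

theorem indep₁₃_iff_cov₁₃_zero_eq_zero (hp : ∑ s, p s = 1) :
    Indep₁₃ p ↔ ∀ a, cov₁₃ p a 0 = 0 := by
  simp only [indep₁₃_iff_cov₁₃_eq_zero, Fin.forall_fin_two, cov₁₃_one hp, neg_eq_zero, and_self]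

theorem Indep₁₂.cov₁₃_mul_cov₁₃_swap₁₂_eq_zero (h₁₂ : Indep₁₂ p) (hcond : CondIndep₁₂ p)
    (hp : ∑ s, p s = 1) (a : A) (b : B) : cov₁₃ p a 0 * cov₁₃ (swap₁₂ p) b 0 = 0 := by
  have hmass : marginal₃ p 1 = 1 - marginal₃ p 0 :=
    eq_sub_of_add_eq' (marginal₃_zero_add_one hp)
  have hmarg : p (a, b, 0) + p (a, b, 1) =
      (marginal₁₃ p a 0 + marginal₁₃ p a 1) * (marginal₂₃ p b 0 + marginal₂₃ p b 1) := by
    simpa only [marginal₁₂, ← sum_marginal₁₃, ← sum_marginal₂₃, Fin.sum_univ_two] using h₁₂ a b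
  have hcond_zero := hcond a b 0
  have hcond_one := hcond a b 1
  have hcov_swap : cov₁₃ (swap₁₂ p) b 0 =
      marginal₂₃ p b 0 - (marginal₂₃ p b 0 + marginal₂₃ p b 1) * marginal₃ p 0 := by
    rw [cov₁₃, marginal₃_swap₁₂, ← Fin.sum_univ_two (marginal₂₃ p b), sum_marginal₂₃]
    rfl
  rw [hmass] at hcond_one
  rw [hcov_swap, cov₁₃, ← sum_marginal₁₃, Fin.sum_univ_two]
  -- The law of total covariance, multiplied by `p₃(0) p₃(1)` to clear denominators.
  linear_combination marginal₃ p 0 * (1 - marginal₃ p 0) * hmarg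
    - (1 - marginal₃ p 0) * hcond_zero - marginal₃ p 0 * hcond_one

theorem Indep₁₂.indep₁₃_or_indep₁₃_swap₁₂ [NoZeroDivisors R] (h₁₂ : Indep₁₂ p)
    (hcond : CondIndep₁₂ p) (hp : ∑ s, p s = 1) : Indep₁₃ p ∨ Indep₁₃ (swap₁₂ p) := by
  rw [indep₁₃_iff_cov₁₃_zero_eq_zero hp,
    indep₁₃_iff_cov₁₃_zero_eq_zero ((sum_swap₁₂ p).trans hp)]
  simpa only [mul_eq_zero, forall_or_left, forall_or_right] using
    h₁₂.cov₁₃_mul_cov₁₃_swap₁₂_eq_zero hcond hp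

theorem marginal_and_conditional_indep_implies_joint_indep_general [IsDomain R]
    (hp : ∑ s, p s = 1) (h₁₂ : Indep₁₂ p) (hcond : CondIndep₁₂ p) :
    Indep₁_₂₃ p ∨ Indep₁_₂₃ (swap₁₂ p) := by
  have hp_swap : ∑ s, swap₁₂ p s = 1 := (sum_swap₁₂ p).trans hp
  exact (h₁₂.indep₁₃_or_indep₁₃_swap₁₂ hcond hp).imp
    (fun h ↦ h.indep₁_₂₃ h₁₂ hcond (subsingleton_marginal₃_eq_zero hp))
    (fun h ↦ h.indep₁_₂₃ h₁₂.swap hcond.swap (subsingleton_marginal₃_eq_zero hp_swap))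

end Binary

/-- If `(X1, X2, X3)` is a discrete random vector with `X3` binary such that
`X1 ⊥ X2` and `X1 ⊥ X2 | X3`, then `X1 ⊥ (X2, X3)` or `X2 ⊥ (X1, X3)`. -/
theorem marginal_and_conditional_indep_implies_joint_indep
    {A B : Type*} [Fintype A] [Fintype B] [Nonempty A] [Nonempty B]
    (p : A × B × Fin 2 → ℝ)
    (hp0 : ∀ s, 0 ≤ p s) (hp1 : ∑ s, p s = 1)
    -- X1 ⊥ X2 : p₁₂(a,b) = p₁(a) · p₂(b)
    (hmarg : ∀ a b, (∑ c, p (a, b, c))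
        = (∑ b', ∑ c, p (a, b', c)) * (∑ a', ∑ c, p (a', b, c)))
    -- X1 ⊥ X2 | X3 : p₁₂₃(a,b,c) · p₃(c) = p₁₃(a,c) · p₂₃(b,c)
    (hcond : ∀ a b c, p (a, b, c) * (∑ a', ∑ b', p (a', b', c))
        = (∑ b', p (a, b', c)) * (∑ a', p (a', b, c))) :
    -- X1 ⊥ (X2, X3) : p(a,b,c) = p₁(a) · p₂₃(b,c)
    (∀ a b c, p (a, b, c) = (∑ b', ∑ c', p (a, b', c')) * (∑ a', p (a', b, c)))
    -- or X2 ⊥ (X1, X3) : p(a,b,c) = p₂(b) · p₁₃(a,c)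
    ∨ (∀ a b c, p (a, b, c) = (∑ a', ∑ c', p (a', b, c')) * (∑ b', p (a, b', c))) := by
  exact (marginal_and_conditional_indep_implies_joint_indep_general hp1 hmarg hcond).imp id
    fun h a b c ↦ h b a c
end

section
/- Let τ be a finite index set and d_v ≥ 1 for v ∈ τ, and let p be a pmf on I_τ = ∏_{v∈τ} {1,…,d_v}. For any i ∈ I_τ, let σ = σ(i) = {v ∈ τ : i_v ≤ d_v − 1} (the coordinates of i not equal to the highest state d_v). Then p(i) = ∑_{α : σ ⊆ α ⊆ τ} (−1)^{|α∖σ|} ∑_{j ∈ J_{α∖σ}} q(j, i_σ), where (j, i_σ) denotes the element of J_α whose coordinates on α∖σ are given by j and whose coordinates on σ are given by i_σ. (Möbius inversion for saturated Möbius parameters, Lemma 7.) -/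
open Finset
open scoped Classical

/-- The saturated Möbius parameter of `A ⊆ τ` at the `A`-coordinates of `j`: the marginal
probability that the coordinates in `A` equal those of `j`.  (For `A = ∅` this equals `1`
for any pmf, matching the convention `q(j_∅) = 1`.) -/
noncomputable def satMobius {τ : Type*} [Fintype τ] {d : τ → ℕ}
    (p : (∀ v, Fin (d v)) → ℝ) (A : Finset τ) (j : ∀ v, Fin (d v)) : ℝ :=
  ∑ k ∈ Finset.univ.filter (fun k : ∀ v, Fin (d v) => ∀ v ∈ A, k v = j v), p k

/-- `σ(i)`: the set of coordinates of `i` that are not equal to the highest state.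
(States are `Fin (d v) = {0, …, d v − 1}`, the highest state being `d v − 1`; a coordinate
lies in the reduced range `[d v − 1]` iff `i v + 1 < d v`.) -/
noncomputable def sigmaOf {τ : Type*} [Fintype τ] (d : τ → ℕ)
    (i : ∀ v, Fin (d v)) : Finset τ :=
  Finset.univ.filter (fun v => (i v : ℕ) + 1 < d v)

/-!
Write `α = σ ∪ β` with `β` disjoint from `σ`. Every coordinate of `i` outside `σ` is in the highest
state, so summing the marginals over `j ∈ J_β` collects the mass of all states that agree with `i`
on `σ` and differ from `i` at every coordinate in `β`. The alternating sum over `β` is then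
inclusion–exclusion for the events "coordinate `v` differs from `i v`", `v ∉ σ`, and the only state
that agrees with `i` on `σ` and lies in none of these events is `i` itself.
-/

section

variable {τ M : Type*} {S : τ → Type*} [Fintype τ] [DecidableEq τ]

theorem sum_filter_superset_eq_sum_powerset_compl [AddCommMonoid M] (σ : Finset τ)
    (f : Finset τ → M) :
    ∑ α with σ ⊆ α, f α = ∑ β ∈ σᶜ.powerset, f (σ ∪ β) :=
  sum_nbij' (· \ σ) (σ ∪ ·)
    (by simp +contextual [subset_compl_iff_disjoint_left, disjoint_sdiff])
    (by simp)
    (by simp +contextual)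
    (by simp +contextual [subset_compl_iff_disjoint_left, union_sdiff_cancel_left])
    (by simp +contextual [union_eq_right.mpr])

variable [∀ v, Fintype (S v)] [∀ v, DecidableEq (S v)]

/-- The total mass that a weight function `p` on a finite product gives to the states agreeing with
`j` on `A`. It extends `satMobius` to arbitrary finite state spaces and to weights in any additive
commutative monoid; as there, `j` is a full state of which only the coordinates in `A` matter. -/
def marginalMass [AddCommMonoid M] (p : (∀ v, S v) → M) (A : Finset τ) (j : ∀ v, S v) : M :=
  ∑ k with ∀ v ∈ A, k v = j v, p k

theorem sum_marginalMass_union [AddCommMonoid M] (p : (∀ v, S v) → M) (i : ∀ v, S v)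
    (P : ∀ v, S v → Prop) [∀ v, DecidablePred (P v)] {σ β : Finset τ} (hσβ : Disjoint σ β) :
    ∑ j with (∀ v ∈ β, P v (j v)) ∧ ∀ v ∉ β, j v = i v, marginalMass p (σ ∪ β) j =
      ∑ k with (∀ v ∈ β, P v (k v)) ∧ ∀ v ∈ σ, k v = i v, p k := by
  let completions : Finset (∀ v, S v) := {j | (∀ v ∈ β, P v (j v)) ∧ ∀ v ∉ β, j v = i v}
  let agreeing : Finset (∀ v, S v) := {k | (∀ v ∈ β, P v (k v)) ∧ ∀ v ∈ σ, k v = i v}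
  have maps_to : ∀ k ∈ agreeing, β.piecewise k i ∈ completions := by
    simp +contextual [agreeing, completions]
  have fiber_eq : ∀ j ∈ completions,
      ({k | ∀ v ∈ σ ∪ β, k v = j v} : Finset _) = {k ∈ agreeing | β.piecewise k i = j} := by
    intro j hj
    ext k
    simp only [agreeing, completions, mem_filter, mem_univ, true_and, mem_union, funext_iff,
      piecewise] at hj ⊢
    grind [Finset.disjoint_left]
  calc
    ∑ j ∈ completions, marginalMass p (σ ∪ β) j
      = ∑ j ∈ completions, ∑ k ∈ agreeing with β.piecewise k i = j, p k :=
        sum_congr rfl fun j hj ↦ sum_congr (fiber_eq j hj) fun _ _ ↦ rfl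
    _ = ∑ k ∈ agreeing, p k := sum_fiberwise_of_maps_to maps_to p

theorem eq_sum_powerset_compl_neg_one_pow_smul [AddCommGroup M] (p : (∀ v, S v) → M)
    (i : ∀ v, S v) (σ : Finset τ) :
    p i = ∑ β ∈ σᶜ.powerset, (-1 : ℤ) ^ #β •
      ∑ k with (∀ v ∈ β, k v ≠ i v) ∧ ∀ v ∈ σ, k v = i v, p k := by
  let differing (v : τ) : Finset (∀ v, S v) := {k | k v ≠ i v}
  let mass (k : ∀ v, S v) : M := if ∀ v ∈ σ, k v = i v then p k else 0
  calc
    p i = ∑ k ∈ σᶜ.inf fun v ↦ (differing v)ᶜ, mass k := by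
      have eq_singleton : {k ∈ σᶜ.inf fun v ↦ (differing v)ᶜ | ∀ v ∈ σ, k v = i v} = {i} := by
        ext k
        simp only [differing, mem_filter, mem_inf, mem_compl, mem_univ, true_and, not_not,
          mem_singleton, funext_iff]
        grind
      rw [← sum_filter, eq_singleton, sum_singleton]
    _ = ∑ β ∈ σᶜ.powerset, (-1 : ℤ) ^ #β • ∑ k ∈ β.inf differing, mass k :=
      inclusion_exclusion_sum_inf_compl σᶜ differing mass
    _ = ∑ β ∈ σᶜ.powerset, (-1 : ℤ) ^ #β •
          ∑ k with (∀ v ∈ β, k v ≠ i v) ∧ ∀ v ∈ σ, k v = i v, p k := by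
      refine sum_congr rfl fun β _ ↦ congrArg _ ?_
      rw [← sum_filter]
      congr 1
      ext k
      simp [differing, mem_inf]

/-- The coordinates of `i` outside `σ` play the role of the highest states. -/
theorem mobius_inversion_general [AddCommGroup M] (p : (∀ v, S v) → M) (i : ∀ v, S v)
    (σ : Finset τ) :
    p i = ∑ α with σ ⊆ α, (-1 : ℤ) ^ #(α \ σ) •
      ∑ j with (∀ v ∈ α \ σ, j v ≠ i v) ∧ ∀ v ∉ α \ σ, j v = i v, marginalMass p α j := by
  rw [sum_filter_superset_eq_sum_powerset_compl, eq_sum_powerset_compl_neg_one_pow_smul p i σ]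
  refine sum_congr rfl fun β hβ ↦ ?_
  have hσβ : Disjoint σ β := subset_compl_iff_disjoint_left.mp (mem_powerset.mp hβ)
  rw [union_sdiff_cancel_left hσβ, sum_marginalMass_union p i (fun v a ↦ a ≠ i v) hσβ]

end

theorem satMobius_eq_marginalMass {τ : Type*} [Fintype τ] {d : τ → ℕ}
    (p : (∀ v, Fin (d v)) → ℝ) (A : Finset τ) (j : ∀ v, Fin (d v)) :
    satMobius p A j = marginalMass p A j :=
  rfl

theorem val_add_one_lt_iff_ne_of_notMem_sigmaOf {τ : Type*} [Fintype τ] {d : τ → ℕ}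
    {i : ∀ v, Fin (d v)} {v : τ} (hv : v ∉ sigmaOf d i) (a : Fin (d v)) :
    (a : ℕ) + 1 < d v ↔ a ≠ i v := by
  simp only [sigmaOf, mem_filter, mem_univ, true_and] at hv
  grind

theorem forall_mem_sdiff_sigmaOf_val_add_one_lt_iff {τ : Type*} [Fintype τ] {d : τ → ℕ}
    (i j : ∀ v, Fin (d v)) (α : Finset τ) :
    (∀ v ∈ α \ sigmaOf d i, (j v : ℕ) + 1 < d v) ↔ ∀ v ∈ α \ sigmaOf d i, j v ≠ i v :=
  forall₂_congr fun _ hv ↦ val_add_one_lt_iff_ne_of_notMem_sigmaOf (mem_sdiff.mp hv).2 _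

/-- Lemma 7, Möbius inversion: for a pmf `p` on `I_τ` and any state `i`,
with `σ = σ(i)`,
`p(i) = ∑_{σ ⊆ α ⊆ τ} (−1)^{|α∖σ|} ∑_{j ∈ J_{α∖σ}} q(j, i_σ)`,
where the inner sum ranges over full states `j` agreeing with `i` outside `α ∖ σ` and
taking reduced values on `α ∖ σ`. -/
theorem mobius_inversion {τ : Type*} [Fintype τ] (d : τ → ℕ) (hd : ∀ v, 1 ≤ d v)
    (p : (∀ v, Fin (d v)) → ℝ) (hp0 : ∀ i, 0 ≤ p i) (hp1 : ∑ i, p i = 1)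
    (i : ∀ v, Fin (d v)) :
    p i = ∑ α ∈ Finset.univ.powerset.filter (fun α => sigmaOf d i ⊆ α),
      (-1 : ℝ) ^ ((α \ sigmaOf d i).card) *
        ∑ j ∈ Finset.univ.filter (fun j : ∀ v, Fin (d v) =>
            (∀ v ∈ α \ sigmaOf d i, (j v : ℕ) + 1 < d v) ∧
            (∀ v ∉ α \ sigmaOf d i, j v = i v)),
          satMobius p α j := by
  simpa only [forall_mem_sdiff_sigmaOf_val_add_one_lt_iff, satMobius_eq_marginalMass, powerset_univ,
    zsmul_eq_mul, Int.cast_pow, Int.cast_neg, Int.cast_one] using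
    mobius_inversion_general p i (sigmaOf d i)
end

section
/- Let τ be a finite index set with d_v ≥ 1 for v ∈ τ, let π be a finite index set with finite state spaces I_π, and let Pa : τ → Finset(π) be a parent assignment. Let C be the set of families P = (P_{i_π})_{i_π ∈ I_π} of strictly positive pmfs on I_τ such that for every nonempty σ ⊆ τ, every j_σ ∈ J_σ, and every pair i_π, k_π ∈ I_π with i_{Pa(σ)} = k_{Pa(σ)}: ∑_{i_τ : (i_τ)_σ = j_σ} P_{i_π}(i_τ) = ∑_{i_τ : (i_τ)_σ = j_σ} P_{k_π}(i_τ). Let n : I_τ × I_π → ℕ be counts with n(i_τ, i_π) > 0 for all (i_τ, i_π), and define the component log-likelihood ℓ(P) = ∑_{i_τ, i_π} n(i_τ, i_π) · log P_{i_π}(i_τ). Then ℓ attains a maximum on C at a unique point, and this point is the unique local maximum of ℓ on C (with respect to the subspace topology on C ⊆ ℝ^{I_τ × I_π}). (Theorem 13, stated for a complete chain component τ: completeness makes all subsets of τ connected and condition (ii) vacuous, so the constraint set is exactly condition (iii) over all nonempty σ ⊆ τ.) -/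
/-!
The log-likelihood `∑ n log P` is strictly concave on the positive orthant, and the constraints
other than positivity cut out a convex set, so local maxima are global and there is at most one.
For existence, allow zero probabilities: the constraint set becomes a compact polytope, on which the
likelihood `∏ P ^ n` is continuous. Since all exponents are positive it vanishes wherever some
cell does, so its maximum over the polytope, being positive, is attained at a strictly positive
point.
-/

open Finset
open scoped Classical

section

variable {τ π : Type*} [Fintype τ] [Fintype π] {d : τ → ℕ} {e : π → ℕ}

/-- The constraint set `C` of Theorem 13 (for a complete chain component): families
`P = (P_{i_π})_{i_π}` of strictly positive pmfs on `I_τ` such that for every nonempty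
`σ ⊆ τ`, every `j_σ ∈ J_σ` and every pair of conditioning states agreeing on `Pa(σ)`,
the marginal probabilities `q(j_σ | ·)` agree (condition (iii) of Theorem 8). -/
def constraintSet (d : τ → ℕ) (e : π → ℕ) (Pa : τ → Finset π) :
    Set ((∀ u, Fin (e u)) → (∀ v, Fin (d v)) → ℝ) :=
  {P | (∀ (c : ∀ u, Fin (e u)) (i : ∀ v, Fin (d v)), 0 < P c i) ∧
       (∀ c : ∀ u, Fin (e u), ∑ i : ∀ v, Fin (d v), P c i = 1) ∧
       (∀ σ : Finset τ, σ.Nonempty →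
         ∀ j : ∀ v, Fin (d v), (∀ v ∈ σ, (j v : ℕ) + 1 < d v) →
           ∀ c k : ∀ u, Fin (e u), (∀ u ∈ σ.biUnion Pa, c u = k u) →
             (∑ i ∈ Finset.univ.filter
                 (fun i : ∀ v, Fin (d v) => ∀ v ∈ σ, i v = j v), P c i)
               = ∑ i ∈ Finset.univ.filter
                   (fun i : ∀ v, Fin (d v) => ∀ v ∈ σ, i v = j v), P k i)}

/-- The component log-likelihood function `ℓ(P) = ∑ n(i_τ, i_π) log P_{i_π}(i_τ)`. -/
noncomputable def loglik (n : ((∀ v, Fin (d v)) × (∀ u, Fin (e u))) → ℕ)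
    (P : (∀ u, Fin (e u)) → (∀ v, Fin (d v)) → ℝ) : ℝ :=
  ∑ s : (∀ v, Fin (d v)) × (∀ u, Fin (e u)), (n s : ℝ) * Real.log (P s.2 s.1)

/-- The open positive orthant of `ι → ℝ`, the natural domain of `weightedLogSum`. -/
def posOrthant (ι : Type*) : Set (ι → ℝ) :=
  Set.univ.pi fun _ => Set.Ioi 0

/-- The log-likelihood with cell probabilities `p` and real cell weights `w` in place of counts. -/
noncomputable def weightedLogSum {ι : Type*} [Fintype ι] (w p : ι → ℝ) : ℝ :=
  ∑ i, w i * Real.log (p i)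

section WeightedLogSum

variable {ι : Type*} [Fintype ι] {w : ι → ℝ}

theorem strictConcaveOn_weightedLogSum (hw : ∀ i, 0 < w i) :
    StrictConcaveOn ℝ (posOrthant ι) (weightedLogSum w) := by
  refine ⟨convex_pi fun _ _ => convex_Ioi 0, fun p hp q hq hpq a b ha hb hab => ?_⟩
  obtain ⟨j, hj⟩ := Function.ne_iff.mp hpq
  have hle (i : ι) : a * Real.log (p i) + b * Real.log (q i) ≤ Real.log (a * p i + b * q i) :=
    strictConcaveOn_log_Ioi.concaveOn.2 (hp i trivial) (hq i trivial) ha.le hb.le hab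
  have hlt : a * Real.log (p j) + b * Real.log (q j) < Real.log (a * p j + b * q j) :=
    strictConcaveOn_log_Ioi.2 (hp j trivial) (hq j trivial) hj ha hb hab
  calc a • weightedLogSum w p + b • weightedLogSum w q
      = ∑ i, w i * (a * Real.log (p i) + b * Real.log (q i)) := by
        simp only [weightedLogSum, smul_eq_mul, mul_sum, ← sum_add_distrib]
        exact sum_congr rfl fun i _ => by ring
    _ < ∑ i, w i * Real.log (a * p i + b * q i) :=
        sum_lt_sum (fun i _ => mul_le_mul_of_nonneg_left (hle i) (hw i).le)
          ⟨j, mem_univ j, mul_lt_mul_of_pos_left hlt (hw j)⟩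

theorem strictConcaveOn_weightedLogSum_comp {E : Type*} [AddCommGroup E] [Module ℝ E]
    {A : Set E} {φ : E →ₗ[ℝ] ι → ℝ} (hw : ∀ i, 0 < w i) (hA : Convex ℝ A)
    (hφ : Set.InjOn φ A) :
    StrictConcaveOn ℝ (A ∩ φ ⁻¹' posOrthant ι) (weightedLogSum w ∘ φ) := by
  have hconc := strictConcaveOn_weightedLogSum hw
  refine ⟨hA.inter (hconc.1.linear_preimage φ), fun x hx y hy hxy a b ha hb hab => ?_⟩
  simpa only [Function.comp_apply, map_add, map_smul] using
    hconc.2 hx.2 hy.2 (hφ.ne hx.1 hy.1 hxy) ha hb hab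

theorem log_prod_rpow_eq_weightedLogSum {p : ι → ℝ} (hp : p ∈ posOrthant ι) :
    Real.log (∏ i, p i ^ w i) = weightedLogSum w p := by
  rw [Real.log_prod fun i _ => (Real.rpow_pos_of_pos (hp i trivial) _).ne']
  exact sum_congr rfl fun i _ => Real.log_rpow (hp i trivial) _

theorem mem_posOrthant_of_prod_rpow_pos {p : ι → ℝ} (hw : ∀ i, w i ≠ 0) (hp : 0 ≤ p)
    (h : 0 < ∏ i, p i ^ w i) : p ∈ posOrthant ι := by
  refine fun i _ => (hp i).lt_of_ne' fun hi => h.ne' ?_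
  exact prod_eq_zero (mem_univ i) (by rw [hi, Pi.zero_apply, Real.zero_rpow (hw i)])

theorem exists_isMaxOn_weightedLogSum_comp {X : Type*} [TopologicalSpace X] {A : Set X}
    {f : X → ι → ℝ} (hw : ∀ i, 0 < w i) (hA : IsCompact A) (hf : Continuous f)
    (hne : (A ∩ f ⁻¹' posOrthant ι).Nonempty) :
    ∃ x ∈ A ∩ f ⁻¹' posOrthant ι,
      IsMaxOn (weightedLogSum w ∘ f) (A ∩ f ⁻¹' posOrthant ι) x := by
  let likelihood (x : X) : ℝ := ∏ i, f x i ^ w i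
  have likelihood_pos {x : X} (hx : f x ∈ posOrthant ι) : 0 < likelihood x :=
    prod_pos fun i _ => Real.rpow_pos_of_pos (hx i trivial) _
  have hcont : Continuous likelihood := continuous_finsetProd _ fun i _ =>
    ((continuous_apply i).comp hf).rpow_const fun _ => Or.inr (hw i).le
  have hsub : A ∩ f ⁻¹' posOrthant ι ⊆ A ∩ f ⁻¹' Set.Ici 0 :=
    Set.inter_subset_inter_right A fun x hx i => (hx i trivial).le
  have hcompact : IsCompact (A ∩ f ⁻¹' Set.Ici 0) := hA.inter_right (isClosed_Ici.preimage hf)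
  obtain ⟨x, ⟨hxA, hx_nonneg⟩, hmax⟩ :=
    hcompact.exists_isMaxOn (hne.mono hsub) hcont.continuousOn
  obtain ⟨z, hz⟩ := hne
  have hx : f x ∈ posOrthant ι := mem_posOrthant_of_prod_rpow_pos (fun i => (hw i).ne')
    hx_nonneg ((likelihood_pos hz.2).trans_le (hmax (hsub hz)))
  refine ⟨x, ⟨hxA, hx⟩, fun y hy => ?_⟩
  calc weightedLogSum w (f y)
      = Real.log (likelihood y) := (log_prod_rpow_eq_weightedLogSum hy.2).symm
    _ ≤ Real.log (likelihood x) := Real.log_le_log (likelihood_pos hy.2) (hmax (hsub hy))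
    _ = weightedLogSum w (f x) := log_prod_rpow_eq_weightedLogSum hx

/-- The map `φ` reads off the cell probabilities, so that the constraint set may live in a space of
families such as `κ → ι → ℝ` carrying its own topology. -/
theorem loglik_unique_local_max_general {E : Type*} [AddCommGroup E] [Module ℝ E]
    [TopologicalSpace E] [IsTopologicalAddGroup E] [ContinuousSMul ℝ E] {A : Set E}
    {φ : E →L[ℝ] ι → ℝ} (hw : ∀ i, 0 < w i) (hcompact : IsCompact A) (hconv : Convex ℝ A)
    (hφ : Set.InjOn φ A) (hne : (A ∩ φ ⁻¹' posOrthant ι).Nonempty) :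
    ∃ x ∈ A ∩ φ ⁻¹' posOrthant ι,
      IsMaxOn (weightedLogSum w ∘ φ) (A ∩ φ ⁻¹' posOrthant ι) x ∧
      ∀ y ∈ A ∩ φ ⁻¹' posOrthant ι,
        IsLocalMaxOn (weightedLogSum w ∘ φ) (A ∩ φ ⁻¹' posOrthant ι) y → y = x := by
  have hconc : StrictConcaveOn ℝ (A ∩ φ ⁻¹' posOrthant ι) (weightedLogSum w ∘ φ) :=
    strictConcaveOn_weightedLogSum_comp (φ := φ.toLinearMap) hw hconv hφ
  obtain ⟨x, hx, hmax⟩ := exists_isMaxOn_weightedLogSum_comp hw hcompact φ.continuous hne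
  refine ⟨x, hx, hmax, fun y hy hlocal => ?_⟩
  exact hconc.eq_of_isMaxOn (.of_isLocalMaxOn_of_concaveOn hy hlocal hconc.concaveOn) hmax hy hx

end WeightedLogSum

/-- The reindexing `P ↦ (P c i)_{(i, c)}` of a family of vectors by the cells of a contingency
table, with the outcome before the condition as in `loglik`. -/
def cellProbabilities (ι κ : Type*) : (κ → ι → ℝ) →L[ℝ] ι × κ → ℝ :=
  .pi fun s => .comp (.proj s.1) (.proj s.2)

theorem cellProbabilities_injective (ι κ : Type*) :
    Function.Injective (cellProbabilities ι κ) := fun _ _ h =>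
  funext fun c => funext fun i => congrFun h (i, c)

section ConstraintPolytope

omit [Fintype π]

/-- The linear part of `constraintSet`: families whose marginals on `σ`, at states in
`J_σ`, depend only on the states of `Pa(σ)`. As a subspace it is closed and convex. -/
def marginalConstraints (d : τ → ℕ) (e : π → ℕ) (Pa : τ → Finset π) :
    Submodule ℝ ((∀ u, Fin (e u)) → (∀ v, Fin (d v)) → ℝ) where
  carrier := {P | ∀ σ : Finset τ, σ.Nonempty →
    ∀ j : ∀ v, Fin (d v), (∀ v ∈ σ, (j v : ℕ) + 1 < d v) →
      ∀ c k : ∀ u, Fin (e u), (∀ u ∈ σ.biUnion Pa, c u = k u) →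
        ∑ i with ∀ v ∈ σ, i v = j v, P c i = ∑ i with ∀ v ∈ σ, i v = j v, P k i}
  zero_mem' _ _ _ _ _ _ _ := rfl
  add_mem' hP hQ σ hσ j hj c k hck := by
    simp only [Pi.add_apply, sum_add_distrib, hP σ hσ j hj c k hck, hQ σ hσ j hj c k hck]
  smul_mem' a P hP σ hσ j hj c k hck := by
    simp only [Pi.smul_apply, ← smul_sum, hP σ hσ j hj c k hck]

/-- The polytope obtained from `constraintSet` by allowing cells of probability zero. -/
def constraintPolytope (d : τ → ℕ) (e : π → ℕ) (Pa : τ → Finset π) :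
    Set ((∀ u, Fin (e u)) → (∀ v, Fin (d v)) → ℝ) :=
  (Set.univ.pi fun _ => stdSimplex ℝ (∀ v, Fin (d v))) ∩ marginalConstraints d e Pa

theorem constraintSet_eq_constraintPolytope_inter (Pa : τ → Finset π) :
    constraintSet d e Pa =
      constraintPolytope d e Pa ∩ cellProbabilities _ _ ⁻¹' posOrthant _ := by
  ext P
  constructor
  · rintro ⟨hpos, hsum, hmarg⟩
    exact ⟨⟨fun c _ => ⟨fun i => (hpos c i).le, hsum c⟩, hmarg⟩, fun s _ => hpos s.2 s.1⟩
  · rintro ⟨⟨hsimplex, hmarg⟩, hpos⟩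
    exact ⟨fun c i => hpos (i, c) trivial, fun c => (hsimplex c trivial).2, hmarg⟩

theorem isCompact_constraintPolytope [Finite π] (Pa : τ → Finset π) :
    IsCompact (constraintPolytope d e Pa) :=
  (isCompact_univ_pi fun _ => isCompact_stdSimplex ℝ _).inter_right
    (marginalConstraints d e Pa).closed_of_finiteDimensional

theorem convex_constraintPolytope (Pa : τ → Finset π) :
    Convex ℝ (constraintPolytope d e Pa) :=
  (convex_pi fun _ _ => convex_stdSimplex ℝ (∀ v, Fin (d v))).inter
    (marginalConstraints d e Pa).convex

theorem constraintSet_nonempty (Pa : τ → Finset π) (hd : ∀ v, 1 ≤ d v) :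
    (constraintSet d e Pa).Nonempty := by
  have (v : τ) : NeZero (d v) := ⟨Nat.one_le_iff_ne_zero.mp (hd v)⟩
  let uniform : stdSimplex ℝ (∀ v, Fin (d v)) := stdSimplex.barycenter
  refine ⟨fun _ => uniform, fun _ _ => ?_, fun _ => uniform.2.2, fun _ _ _ _ _ _ _ => rfl⟩
  exact inv_pos.mpr (Nat.cast_pos.mpr Fintype.card_pos)

end ConstraintPolytope

/-- Theorem 13, for a complete chain component: if all counts are positive,
the component log-likelihood attains its maximum on the constraint set `C` at a point
which is the unique local maximum of `ℓ` on `C` (in the subspace topology). -/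
theorem loglik_unique_local_max (Pa : τ → Finset π)
    (hd : ∀ v, 1 ≤ d v)
    (n : ((∀ v, Fin (d v)) × (∀ u, Fin (e u))) → ℕ)
    (hn : ∀ s, 0 < n s) :
    ∃ x ∈ constraintSet d e Pa,
      IsMaxOn (loglik n) (constraintSet d e Pa) x ∧
      ∀ y ∈ constraintSet d e Pa,
        IsLocalMaxOn (loglik n) (constraintSet d e Pa) y → y = x := by
  have hne := constraintSet_nonempty (e := e) Pa hd
  rw [constraintSet_eq_constraintPolytope_inter] at hne ⊢
  exact loglik_unique_local_max_general (w := fun s => n s) (fun s => Nat.cast_pos.mpr (hn s))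
    (isCompact_constraintPolytope Pa) (convex_constraintPolytope Pa)
    (cellProbabilities_injective _ _).injOn hne

end
end

section
/- Let d_1, d_2, d_3, d_4 ≥ 2 and let p be a positive pmf on {1,…,d_1} × {1,…,d_2} × {1,…,d_3} × {1,…,d_4} (a random vector (X1,X2,X3,X4)) satisfying (X2,X4) ⊥ X1. Define, for i_1 ∈ [d_1]: q_3(i_3|i_1) = P(X3=i_3 | X1=i_1), q_{23}(i_2,i_3|i_1) = P(X2=i_2, X3=i_3 | X1=i_1), q_{34}(i_3,i_4|i_1) = P(X3=i_3, X4=i_4 | X1=i_1), q_{234}(i_2,i_3,i_4|i_1) = P(X2=i_2, X3=i_3, X4=i_4 | X1=i_1), and the marginals q_2(i_2)=P(X2=i_2), q_4(i_4)=P(X4=i_4), q_{24}(i_2,i_4)=P(X2=i_2, X4=i_4). For i_1 ∈ [d_1] and i_3 ∈ [d_3 − 1], let Q^{(i_1,i_3)} be the d_2 × d_4 matrix with (i_2,i_4) entry: q_{234}(i_2,i_3,i_4|i_1) if i_2 < d_2 and i_4 < d_4; q_{23}(i_2,i_3|i_1) if i_2 < d_2 and i_4 = d_4; q_{34}(i_3,i_4|i_1)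 if i_2 = d_2 and i_4 < d_4; q_3(i_3|i_1) if i_2 = d_2 and i_4 = d_4. For i_3 = d_3, let Q^{(i_1,d_3)} be the d_2 × d_4 matrix with (i_2,i_4) entry: q_{24}(i_2,i_4) − ∑_{k=1}^{d_3−1} q_{234}(i_2,k,i_4|i_1) if i_2 < d_2 and i_4 < d_4; q_2(i_2) − ∑_{k=1}^{d_3−1} q_{23}(i_2,k|i_1) if i_2 < d_2 and i_4 = d_4; q_4(i_4) − ∑_{k=1}^{d_3−1} q_{34}(k,i_4|i_1) if i_2 = d_2 and i_4 < d_4; 1 − ∑_{k=1}^{d_3−1} q_3(k|i_1) if i_2 = d_2 and i_4 = d_4. Then X2 ⊥ X4 | (X1,X3) if and only if for all i_1 ∈ [d_1] and i_3 ∈ [d_3], the matrix Q^{(i_1,i_3)} has rank at most one. (Proposition 14.) -/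
open Finset

section

variable {d1 d2 d3 d4 : ℕ}

/-- `p₁(i₁) = P(X1 = i₁)`. -/
noncomputable def pm1 (p : Fin d1 × Fin d2 × Fin d3 × Fin d4 → ℝ) (i1 : Fin d1) : ℝ :=
  ∑ i2, ∑ i3, ∑ i4, p (i1, i2, i3, i4)

/-- `q₃(i₃ | i₁) = P(X3 = i₃ | X1 = i₁)`. -/
noncomputable def q3 (p : Fin d1 × Fin d2 × Fin d3 × Fin d4 → ℝ)
    (i3 : Fin d3) (i1 : Fin d1) : ℝ :=
  (∑ i2, ∑ i4, p (i1, i2, i3, i4)) / pm1 p i1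

/-- `q₂₃(i₂, i₃ | i₁) = P(X2 = i₂, X3 = i₃ | X1 = i₁)`. -/
noncomputable def q23 (p : Fin d1 × Fin d2 × Fin d3 × Fin d4 → ℝ)
    (i2 : Fin d2) (i3 : Fin d3) (i1 : Fin d1) : ℝ :=
  (∑ i4, p (i1, i2, i3, i4)) / pm1 p i1

/-- `q₃₄(i₃, i₄ | i₁) = P(X3 = i₃, X4 = i₄ | X1 = i₁)`. -/
noncomputable def q34 (p : Fin d1 × Fin d2 × Fin d3 × Fin d4 → ℝ)
    (i3 : Fin d3) (i4 : Fin d4) (i1 : Fin d1) : ℝ :=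
  (∑ i2, p (i1, i2, i3, i4)) / pm1 p i1

/-- `q₂₃₄(i₂, i₃, i₄ | i₁) = P(X2 = i₂, X3 = i₃, X4 = i₄ | X1 = i₁)`. -/
noncomputable def q234 (p : Fin d1 × Fin d2 × Fin d3 × Fin d4 → ℝ)
    (i2 : Fin d2) (i3 : Fin d3) (i4 : Fin d4) (i1 : Fin d1) : ℝ :=
  p (i1, i2, i3, i4) / pm1 p i1

/-- `q₂(i₂) = P(X2 = i₂)`. -/
noncomputable def q2 (p : Fin d1 × Fin d2 × Fin d3 × Fin d4 → ℝ) (i2 : Fin d2) : ℝ :=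
  ∑ i1, ∑ i3, ∑ i4, p (i1, i2, i3, i4)

/-- `q₄(i₄) = P(X4 = i₄)`. -/
noncomputable def q4 (p : Fin d1 × Fin d2 × Fin d3 × Fin d4 → ℝ) (i4 : Fin d4) : ℝ :=
  ∑ i1, ∑ i2, ∑ i3, p (i1, i2, i3, i4)

/-- `q₂₄(i₂, i₄) = P(X2 = i₂, X4 = i₄)`. -/
noncomputable def q24 (p : Fin d1 × Fin d2 × Fin d3 × Fin d4 → ℝ)
    (i2 : Fin d2) (i4 : Fin d4) : ℝ :=
  ∑ i1, ∑ i3, p (i1, i2, i3, i4)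

/-- The matrix `Q^{(i₁, i₃)}` of (5.3)/(5.4).  States are `0`-based: a coordinate `i` of
`Fin d` lies in the reduced range `[d − 1]` iff `(i : ℕ) + 1 < d`, and equals the highest
state `d` iff `¬((i : ℕ) + 1 < d)`. -/
noncomputable def Qmat (p : Fin d1 × Fin d2 × Fin d3 × Fin d4 → ℝ)
    (i1 : Fin d1) (i3 : Fin d3) : Matrix (Fin d2) (Fin d4) ℝ :=
  fun i2 i4 =>
    if (i3 : ℕ) + 1 < d3 then
      if (i2 : ℕ) + 1 < d2 then
        if (i4 : ℕ) + 1 < d4 then q234 p i2 i3 i4 i1 else q23 p i2 i3 i1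
      else
        if (i4 : ℕ) + 1 < d4 then q34 p i3 i4 i1 else q3 p i3 i1
    else
      if (i2 : ℕ) + 1 < d2 then
        if (i4 : ℕ) + 1 < d4 then
          q24 p i2 i4 - ∑ k ∈ Finset.univ.filter (fun k : Fin d3 => (k : ℕ) + 1 < d3),
            q234 p i2 k i4 i1
        else
          q2 p i2 - ∑ k ∈ Finset.univ.filter (fun k : Fin d3 => (k : ℕ) + 1 < d3),
            q23 p i2 k i1
      else
        if (i4 : ℕ) + 1 < d4 then
          q4 p i4 - ∑ k ∈ Finset.univ.filter (fun k : Fin d3 => (k : ℕ) + 1 < d3),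
            q34 p k i4 i1
        else
          1 - ∑ k ∈ Finset.univ.filter (fun k : Fin d3 => (k : ℕ) + 1 < d3), q3 p k i1

/-!
Fix `i₁`, and for each `i₃` let `A` be the joint table of `X2`, `X4` and the event `X3 = i₃`, given
`X1 = i₁`.  As `(X2, X4) ⊥ X1`, the differences defining `Q^{(i₁, d₃)}` complete the sums over
`k < d₃` to sums over all states of `X3`, so each `Q^{(i₁, i₃)}`, also for `i₃ = d₃`, is `A` with
its last row and column replaced by the marginal sums.  This replacement multiplies `A` on either
side by a matrix of determinant one and keeps the rank.  Finally, a nonnegative matrix has rank at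
most one iff each entry times the total is the product of its row and column sums, which for `A` is
`X2 ⊥ X4` given `X1 = i₁`, `X3 = i₃`.
-/

section RankOne

variable {m n R K : Type*} [Fintype n]

theorem mul_eq_mul_of_rank_le_one [CommRing R] [IsDomain R] {A : Matrix m n R} (hA : A.rank ≤ 1)
    (i i' : m) (j j' : n) : A i j * A i' j' = A i j' * A i' j := by
  by_contra hne
  have hdet : (A.submatrix ![i, i'] ![j, j']).det ≠ 0 := by
    rw [Matrix.det_fin_two]
    simpa using sub_ne_zero.2 hne
  have hrank : (A.submatrix ![i, i'] ![j, j']).rank = 2 := by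
    rw [← mul_one (A.submatrix _ _), Matrix.rank_mul_eq_right_of_det_ne_zero _ 1 hdet,
      Matrix.rank_one, Fintype.card_fin]
  have := Matrix.rank_submatrix_le A ![i, i'] ![j, j']
  lia

theorem mul_total_eq_of_rank_le_one [Fintype m] [CommRing R] [IsDomain R] {A : Matrix m n R}
    (hA : A.rank ≤ 1) (i : m) (j : n) :
    A i j * ∑ i', ∑ j', A i' j' = (∑ j', A i j') * ∑ i', A i' j := by
  simp_rw [sum_mul_sum, mul_sum, mul_eq_mul_of_rank_le_one hA i _ j]
  exact sum_comm

theorem rank_le_one_of_mul_total_eq [Fintype m] [Field K] {A : Matrix m n K}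
    (hA : ∑ i, ∑ j, A i j ≠ 0)
    (h : ∀ i j, A i j * ∑ i', ∑ j', A i' j' = (∑ j', A i j') * ∑ i', A i' j) :
    A.rank ≤ 1 := by
  have hA_eq : A = Matrix.vecMulVec (fun i ↦ (∑ j', A i j') / ∑ i', ∑ j', A i' j')
      (fun j ↦ ∑ i', A i' j) := by
    ext i j
    rw [Matrix.vecMulVec_apply, div_mul_eq_mul_div, eq_div_iff hA, h]
  rw [hA_eq]
  exact Matrix.rank_vecMulVec_le _ _

theorem rank_le_one_iff_mul_total_eq [Fintype m] [Field K] [LinearOrder K] [IsStrictOrderedRing K]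
    {A : Matrix m n K} (hA : ∀ i j, 0 ≤ A i j) :
    A.rank ≤ 1 ↔ ∀ i j, A i j * ∑ i', ∑ j', A i' j' = (∑ j', A i j') * ∑ i', A i' j := by
  refine ⟨mul_total_eq_of_rank_le_one, fun h ↦ ?_⟩
  by_cases htotal : ∑ i, ∑ j, A i j = 0
  · have hA_zero : A = 0 := by
      ext i j
      have hrow : ∑ j', A i j' = 0 := (sum_eq_zero_iff_of_nonneg
        fun i' _ ↦ sum_nonneg fun j' _ ↦ hA i' j').1 htotal i (mem_univ i)
      exact (sum_eq_zero_iff_of_nonneg fun j' _ ↦ hA i j').1 hrow j (mem_univ j)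
    simp [hA_zero]
  · exact rank_le_one_of_mul_total_eq htotal h

end RankOne

section MarginBordered

open Matrix nonZeroDivisors

variable {m n R : Type*} [CommRing R]

theorem det_one_updateRow [Fintype m] [DecidableEq m] (l : m) (c : m → R) :
    ((1 : Matrix m m R).updateRow l c).det = c l := by
  rw [← cramer_transpose_apply, transpose_one, cramer_one, Module.End.one_apply]

theorem det_one_updateCol [Fintype n] [DecidableEq n] (k : n) (c : n → R) :
    ((1 : Matrix n n R).updateCol k c).det = c k := by
  rw [← cramer_apply, cramer_one, Module.End.one_apply]

theorem rank_updateRow_vecMul [Fintype m] [DecidableEq m] [Fintype n] (A : Matrix m n R) {l : m}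
    {c : m → R} (hc : c l ∈ R⁰) : (A.updateRow l (c ᵥ* A)).rank = A.rank := by
  have hfactor : A.updateRow l (c ᵥ* A) = (1 : Matrix m m R).updateRow l c * A := by
    rw [updateRow_mul, Matrix.one_mul]
  rw [hfactor, rank_mul_eq_right_of_det_mem_nonZeroDivisors _ _ (by rwa [det_one_updateRow])]

theorem rank_updateCol_mulVec [Fintype n] [DecidableEq n] (A : Matrix m n R) {k : n}
    {c : n → R} (hc : c k ∈ R⁰) : (A.updateCol k (A *ᵥ c)).rank = A.rank := by
  have hfactor : A.updateCol k (A *ᵥ c) = A * (1 : Matrix n n R).updateCol k c := by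
    rw [mul_updateCol, Matrix.mul_one]
  rw [hfactor, rank_mul_eq_left_of_det_mem_nonZeroDivisors _ _ (by rwa [det_one_updateCol])]

variable [Fintype m] [DecidableEq m] [Fintype n] [DecidableEq n]

/-- The contingency table `A` with row `l` replaced by the column sums, column `k` by the row sums,
and the corner `(l, k)` by the total.  The column is replaced after the row, so that the corner
sums the new row `l`. -/
def marginBordered (l : m) (k : n) (A : Matrix m n R) : Matrix m n R :=
  (A.updateRow l (1 ᵥ* A)).updateCol k (A.updateRow l (1 ᵥ* A) *ᵥ 1)

theorem marginBordered_apply (l : m) (k : n) (A : Matrix m n R) (i : m) (j : n) :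
    marginBordered l k A i j =
      if i = l then (if j = k then ∑ i', ∑ j', A i' j' else ∑ i', A i' j)
      else (if j = k then ∑ j', A i j' else A i j) := by
  have hcorner : ∑ j', ∑ i', A i' j' = ∑ i', ∑ j', A i' j' := sum_comm
  by_cases hi : i = l <;> by_cases hj : j = k <;>
    simp [marginBordered, updateRow_apply, mulVec, vecMul, dotProduct, hi, hj,
      hcorner]

theorem rank_marginBordered (l : m) (k : n) (A : Matrix m n R) :
    (marginBordered l k A).rank = A.rank := by
  rw [marginBordered, rank_updateCol_mulVec _ (c := 1) (one_mem R⁰),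
    rank_updateRow_vecMul _ (c := 1) (one_mem R⁰)]

end MarginBordered

section LastState

variable {d : ℕ}

theorem val_add_one_lt_iff_ne_top [NeZero d] {i : Fin d} : (i : ℕ) + 1 < d ↔ i ≠ ⊤ := by
  rw [ne_eq, Fin.ext_iff, Fin.val_top]
  lia

theorem sum_sub_sum_val_add_one_lt {M : Type*} [AddCommGroup M] {i : Fin d}
    (hi : ¬(i : ℕ) + 1 < d) (f : Fin d → M) :
    ∑ k, f k - ∑ k ∈ univ.filter (fun k : Fin d ↦ (k : ℕ) + 1 < d), f k = f i := by
  have hfilter : univ.filter (fun k : Fin d ↦ (k : ℕ) + 1 < d) = univ.erase i := by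
    ext k
    simp only [mem_filter_univ, mem_erase, mem_univ, and_true, ne_eq, Fin.ext_iff]
    lia
  rw [hfilter, sum_erase_eq_sub (mem_univ i), sub_sub_cancel]

end LastState

section ConditionalTable

variable {p : Fin d1 × Fin d2 × Fin d3 × Fin d4 → ℝ} {i1 : Fin d1}

/-- The table `P(X2 = i₂, X3 = i₃, X4 = i₄ | X1 = i₁)` in `i₂` and `i₄`, at fixed states `i₁` and
`i₃`. -/
noncomputable def condTable (p : Fin d1 × Fin d2 × Fin d3 × Fin d4 → ℝ) (i1 : Fin d1)
    (i3 : Fin d3) : Matrix (Fin d2) (Fin d4) ℝ :=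
  Matrix.of fun i2 i4 ↦ q234 p i2 i3 i4 i1

theorem condTable_apply (i2 : Fin d2) (i3 : Fin d3) (i4 : Fin d4) :
    condTable p i1 i3 i2 i4 = q234 p i2 i3 i4 i1 := rfl

theorem q23_eq_sum_condTable (i2 : Fin d2) (i3 : Fin d3) :
    q23 p i2 i3 i1 = ∑ i4, condTable p i1 i3 i2 i4 :=
  sum_div ..

theorem q34_eq_sum_condTable (i3 : Fin d3) (i4 : Fin d4) :
    q34 p i3 i4 i1 = ∑ i2, condTable p i1 i3 i2 i4 :=
  sum_div ..

theorem q3_eq_sum_condTable (i3 : Fin d3) :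
    q3 p i3 i1 = ∑ i2, ∑ i4, condTable p i1 i3 i2 i4 := by
  simp only [q3, condTable_apply, q234, sum_div]

theorem pm1_nonneg (hp : ∀ s, 0 ≤ p s) : 0 ≤ pm1 p i1 :=
  sum_nonneg fun _ _ ↦ sum_nonneg fun _ _ ↦ sum_nonneg fun _ _ ↦ hp _

theorem pm1_pos [NeZero d2] [NeZero d3] [NeZero d4] (hp : ∀ s, 0 < p s) : 0 < pm1 p i1 :=
  sum_pos (fun _ _ ↦ sum_pos (fun _ _ ↦ sum_pos (fun _ _ ↦ hp _) univ_nonempty) univ_nonempty)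
    univ_nonempty

theorem condTable_nonneg (hp : ∀ s, 0 ≤ p s) (i2 : Fin d2) (i3 : Fin d3) (i4 : Fin d4) :
    0 ≤ condTable p i1 i3 i2 i4 :=
  div_nonneg (hp _) (pm1_nonneg hp)

theorem condIndep_iff_q234_mul_q3_eq (hpm : pm1 p i1 ≠ 0) (i2 : Fin d2) (i3 : Fin d3)
    (i4 : Fin d4) :
    p (i1, i2, i3, i4) * (∑ i2', ∑ i4', p (i1, i2', i3, i4')) =
        (∑ i4', p (i1, i2, i3, i4')) * (∑ i2', p (i1, i2', i3, i4)) ↔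
      q234 p i2 i3 i4 i1 * q3 p i3 i1 = q23 p i2 i3 i1 * q34 p i3 i4 i1 := by
  rw [q234, q3, q23, q34, div_mul_div_comm, div_mul_div_comm,
    div_left_inj' (mul_ne_zero hpm hpm)]

theorem condIndep_iff_rank_condTable_le_one (hp : ∀ s, 0 ≤ p s) (hpm : pm1 p i1 ≠ 0)
    (i3 : Fin d3) :
    (∀ i2 i4, p (i1, i2, i3, i4) * (∑ i2', ∑ i4', p (i1, i2', i3, i4')) =
        (∑ i4', p (i1, i2, i3, i4')) * (∑ i2', p (i1, i2', i3, i4))) ↔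
      (condTable p i1 i3).rank ≤ 1 := by
  rw [rank_le_one_iff_mul_total_eq fun i2 i4 ↦ condTable_nonneg hp i2 i3 i4]
  simp only [condIndep_iff_q234_mul_q3_eq hpm, q3_eq_sum_condTable, q23_eq_sum_condTable,
    q34_eq_sum_condTable, condTable_apply]

end ConditionalTable

section Independence

variable {p : Fin d1 × Fin d2 × Fin d3 × Fin d4 → ℝ} {i1 : Fin d1}

theorem sum_q3 (hpm : pm1 p i1 ≠ 0) : ∑ k, q3 p k i1 = 1 := by
  simp only [q3, ← sum_div]
  rw [sum_comm, ← pm1, div_self hpm]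

theorem sum_q234_of_indep (hpm : pm1 p i1 ≠ 0)
    (hind : ∀ i2 i4, (∑ i3, p (i1, i2, i3, i4)) =
      (∑ i1', ∑ i3, p (i1', i2, i3, i4)) * pm1 p i1) (i2 : Fin d2) (i4 : Fin d4) :
    ∑ k, q234 p i2 k i4 i1 = q24 p i2 i4 := by
  simp only [q234, ← sum_div]
  rw [hind, mul_div_cancel_right₀ _ hpm, q24]

theorem sum_q23_of_sum_q234 (h : ∀ i2 i4, ∑ k, q234 p i2 k i4 i1 = q24 p i2 i4) (i2 : Fin d2) :
    ∑ k, q23 p i2 k i1 = q2 p i2 := calc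
  ∑ k, q23 p i2 k i1 = ∑ k, ∑ i4, q234 p i2 k i4 i1 := by
    simp only [q23_eq_sum_condTable, condTable_apply]
  _ = ∑ i4, ∑ k, q234 p i2 k i4 i1 := sum_comm
  _ = ∑ i4, ∑ i1', ∑ k, p (i1', i2, k, i4) := by simp only [h, q24]
  _ = ∑ i1', ∑ i4, ∑ k, p (i1', i2, k, i4) := sum_comm
  _ = q2 p i2 := sum_congr rfl fun _ _ ↦ sum_comm

theorem sum_q34_of_sum_q234 (h : ∀ i2 i4, ∑ k, q234 p i2 k i4 i1 = q24 p i2 i4) (i4 : Fin d4) :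
    ∑ k, q34 p k i4 i1 = q4 p i4 := calc
  ∑ k, q34 p k i4 i1 = ∑ k, ∑ i2, q234 p i2 k i4 i1 := by
    simp only [q34_eq_sum_condTable, condTable_apply]
  _ = ∑ i2, ∑ k, q234 p i2 k i4 i1 := sum_comm
  _ = ∑ i2, ∑ i1', ∑ k, p (i1', i2, k, i4) := by simp only [h, q24]
  _ = q4 p i4 := sum_comm

theorem Qmat_apply_of_sum_q234 (hpm : pm1 p i1 ≠ 0)
    (h : ∀ i2 i4, ∑ k, q234 p i2 k i4 i1 = q24 p i2 i4) (i2 : Fin d2) (i3 : Fin d3)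
    (i4 : Fin d4) :
    Qmat p i1 i3 i2 i4 =
      if (i2 : ℕ) + 1 < d2 then
        if (i4 : ℕ) + 1 < d4 then q234 p i2 i3 i4 i1 else q23 p i2 i3 i1
      else
        if (i4 : ℕ) + 1 < d4 then q34 p i3 i4 i1 else q3 p i3 i1 := by
  by_cases hi3 : (i3 : ℕ) + 1 < d3
  · rw [Qmat, if_pos hi3]
  · rw [Qmat, if_neg hi3, ← h, ← sum_q23_of_sum_q234 h, ← sum_q34_of_sum_q234 h, ← sum_q3 hpm]
    simp only [sum_sub_sum_val_add_one_lt hi3]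

theorem Qmat_eq_marginBordered [NeZero d2] [NeZero d4] (hpm : pm1 p i1 ≠ 0)
    (h : ∀ i2 i4, ∑ k, q234 p i2 k i4 i1 = q24 p i2 i4) (i3 : Fin d3) :
    Qmat p i1 i3 = marginBordered ⊤ ⊤ (condTable p i1 i3) := by
  ext i2 i4
  simp only [Qmat_apply_of_sum_q234 hpm h, marginBordered_apply, val_add_one_lt_iff_ne_top, ite_not,
    ne_eq, q3_eq_sum_condTable, q23_eq_sum_condTable, q34_eq_sum_condTable, condTable_apply]

theorem rank_Qmat (hpm : pm1 p i1 ≠ 0)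
    (h : ∀ i2 i4, ∑ k, q234 p i2 k i4 i1 = q24 p i2 i4) (i3 : Fin d3) :
    (Qmat p i1 i3).rank = (condTable p i1 i3).rank := by
  have : NeZero d2 := ⟨by rintro rfl; simp [pm1] at hpm⟩
  have : NeZero d4 := ⟨by rintro rfl; simp [pm1] at hpm⟩
  rw [Qmat_eq_marginBordered hpm h, rank_marginBordered]

end Independence

theorem prop14_rank_characterization_general
    (p : Fin d1 × Fin d2 × Fin d3 × Fin d4 → ℝ)
    (hp : ∀ s, 0 ≤ p s) (hpm : ∀ i1, pm1 p i1 ≠ 0)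
    (hind : ∀ i1 i2 i4, (∑ i3, p (i1, i2, i3, i4)) =
      (∑ i1', ∑ i3, p (i1', i2, i3, i4)) * pm1 p i1) :
    (∀ i1 i2 i3 i4, p (i1, i2, i3, i4) * (∑ i2', ∑ i4', p (i1, i2', i3, i4')) =
        (∑ i4', p (i1, i2, i3, i4')) * (∑ i2', p (i1, i2', i3, i4))) ↔
      ∀ (i1 : Fin d1) (i3 : Fin d3), (Qmat p i1 i3).rank ≤ 1 := by
  refine forall_congr' fun i1 ↦ ?_
  rw [forall_comm]
  refine forall_congr' fun i3 ↦ ?_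
  rw [rank_Qmat (hpm i1) (sum_q234_of_indep (hpm i1) (hind i1)),
    condIndep_iff_rank_condTable_le_one hp (hpm i1)]

/-- Proposition 14: for a positive pmf `p` on `[d₁]×[d₂]×[d₃]×[d₄]` with
`(X2, X4) ⊥ X1`, the conditional independence `X2 ⊥ X4 | (X1, X3)` holds if and only if
every matrix `Q^{(i₁, i₃)}` has rank at most one. -/
theorem prop14_rank_characterization
    (h1 : 2 ≤ d1) (h2 : 2 ≤ d2) (h3 : 2 ≤ d3) (h4 : 2 ≤ d4)
    (p : Fin d1 × Fin d2 × Fin d3 × Fin d4 → ℝ)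
    (hp0 : ∀ s, 0 < p s) (hp1 : ∑ s, p s = 1)
    -- (X2, X4) ⊥ X1 : p₁₂₄(i₁, i₂, i₄) = p₂₄(i₂, i₄) · p₁(i₁)
    (hind : ∀ i1 i2 i4, (∑ i3, p (i1, i2, i3, i4))
        = (∑ i1', ∑ i3, p (i1', i2, i3, i4)) * pm1 p i1) :
    -- X2 ⊥ X4 | (X1, X3) : p(i) · p₁₃(i₁, i₃) = p₁₂₃(i₁, i₂, i₃) · p₁₃₄(i₁, i₃, i₄)
    (∀ i1 i2 i3 i4, p (i1, i2, i3, i4) * (∑ i2', ∑ i4', p (i1, i2', i3, i4'))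
        = (∑ i4', p (i1, i2, i3, i4')) * (∑ i2', p (i1, i2', i3, i4)))
    ↔ (∀ (i1 : Fin d1) (i3 : Fin d3), (Qmat p i1 i3).rank ≤ 1) := by
  have : NeZero d2 := ⟨by lia⟩
  have : NeZero d3 := ⟨by lia⟩
  have : NeZero d4 := ⟨by lia⟩
  exact prop14_rank_characterization_general p (fun s ↦ (hp0 s).le) (fun _ ↦ (pm1_pos hp0).ne') hind

end
end

section
/- Let p = (p_{ijkl})_{i,j,k,l ∈ {1,2}} be a strictly positive pmf on {1,2}^4 (four binary variables X1, X2, X3, X4, with p_{ijkl} = P(X1=i, X2=j, X3=k, X4=l)). Then the two conditional independences X2 ⊥ X4 | X1 and X1 ⊥ (X2,X4) | X3 hold if and only if at least one of the following two conditions is met: (i) X1 ⊥ (X2,X3,X4) and X2 ⊥ (X1,X4); or (ii) X2 ⊥ X4 | X1 and X1 ⊥ (X2,X4) | X3 and the two equations p_{1121}·p_{2222} − p_{1122}·p_{2221} = p_{1111}·p_{2212} − p_{1112}·p_{2211} and p_{1221}·p_{2122} − p_{1222}·p_{2121} = p_{1211}·p_{2112} − p_{1212}·p_{2111} hold. (Proposition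 17: the decomposition of the binary type III chain graph model for the graph with edges 1 → 3, 2 − 3, 3 − 4.) -/
open Finset

section

/- Four binary variables with states `{1, 2}` encoded as `Fin 2 = {0, 1}`; the state `1`
of the paper is `0` and the state `2` is `1`, so `p_{ijkl} = p (i-1, j-1, k-1, l-1)`. -/

/-- `X2 ⊥ X4 | X1` : `p₁₂₄(i,j,l) · p₁(i) = p₁₂(i,j) · p₁₄(i,l)`. -/
def CI24g1 (p : Fin 2 × Fin 2 × Fin 2 × Fin 2 → ℝ) : Prop :=
  ∀ i j l, (∑ k, p (i, j, k, l)) * (∑ j', ∑ k, ∑ l', p (i, j', k, l'))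
    = (∑ k, ∑ l', p (i, j, k, l')) * (∑ j', ∑ k, p (i, j', k, l))

/-- `X1 ⊥ (X2, X4) | X3` : `p(i,j,k,l) · p₃(k) = p₁₃(i,k) · p₂₃₄(j,k,l)`. -/
def CI1g3 (p : Fin 2 × Fin 2 × Fin 2 × Fin 2 → ℝ) : Prop :=
  ∀ i j k l, p (i, j, k, l) * (∑ i', ∑ j', ∑ l', p (i', j', k, l'))
    = (∑ j', ∑ l', p (i, j', k, l')) * (∑ i', p (i', j, k, l))

/-- `X1 ⊥ (X2, X3, X4)` : `p(i,j,k,l) = p₁(i) · p₂₃₄(j,k,l)`. -/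
def Indep1 (p : Fin 2 × Fin 2 × Fin 2 × Fin 2 → ℝ) : Prop :=
  ∀ i j k l, p (i, j, k, l)
    = (∑ j', ∑ k', ∑ l', p (i, j', k', l')) * (∑ i', p (i', j, k, l))

/-- `X2 ⊥ (X1, X4)` : `p₁₂₄(i,j,l) = p₂(j) · p₁₄(i,l)`. -/
def Indep2 (p : Fin 2 × Fin 2 × Fin 2 × Fin 2 → ℝ) : Prop :=
  ∀ i j l, (∑ k, p (i, j, k, l))
    = (∑ i', ∑ k, ∑ l', p (i', j, k, l')) * (∑ j', ∑ k, p (i, j', k, l))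

/-- Equation (6.4): `p₁₁₂₁ p₂₂₂₂ − p₁₁₂₂ p₂₂₂₁ = p₁₁₁₁ p₂₂₁₂ − p₁₁₁₂ p₂₂₁₁`. -/
def Eq64 (p : Fin 2 × Fin 2 × Fin 2 × Fin 2 → ℝ) : Prop :=
  p (0, 0, 1, 0) * p (1, 1, 1, 1) - p (0, 0, 1, 1) * p (1, 1, 1, 0)
    = p (0, 0, 0, 0) * p (1, 1, 0, 1) - p (0, 0, 0, 1) * p (1, 1, 0, 0)

/-- Equation (6.5): `p₁₂₂₁ p₂₁₂₂ − p₁₂₂₂ p₂₁₂₁ = p₁₂₁₁ p₂₁₁₂ − p₁₂₁₂ p₂₁₁₁`. -/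
def Eq65 (p : Fin 2 × Fin 2 × Fin 2 × Fin 2 → ℝ) : Prop :=
  p (0, 1, 1, 0) * p (1, 0, 1, 1) - p (0, 1, 1, 1) * p (1, 0, 1, 0)
    = p (0, 1, 0, 0) * p (1, 0, 0, 1) - p (0, 1, 0, 1) * p (1, 0, 0, 0)

/-! Write `W i k = P(X1 = i | X3 = k)` and let `Q k` be the 2×2 table of the probabilities
`P(X2 = j, X3 = k, X4 = l)`. Under `X1 ⊥ (X2, X4) | X3` the table of `(X2, X4)` on `X1 = i` is
`∑ k, W i k • Q k`, and for binary variables `X2 ⊥ X4 | X1` says that both of these tables are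
singular. Eliminating the mixed term of the quadratic form `det (x • Q 0 + y • Q 1)` leaves
`det W * (W 0 0 * W 1 0 * det (Q 0) - W 0 1 * W 1 1 * det (Q 1)) = 0`.
The vanishing of the second factor is each of (6.4) and (6.5). If `det W = 0`, then `X1 ⊥ X3`, and
contraction for conditional independence yields first `X1 ⊥ (X2, X3, X4)` and then
`X2 ⊥ (X1, X4)`. -/

section Tables

variable {α β γ R : Type*} [Fintype α]

/-- Independence of the row and the column variable of a two-way table `f`, meant for tables of
total mass `1` since the margins are not normalized. -/
def TableIndep [Fintype β] [CommSemiring R] (f : α → β → R) : Prop :=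
  ∀ a b, f a b = (∑ b', f a b') * ∑ a', f a' b

/-- Conditional independence `A ⊥ B | C` of the variables of a three-way table `f a b c`,
multiplied out so that it makes sense for strata `c` of mass `0`. -/
def TableCondIndep [Fintype β] [CommSemiring R] (f : α → β → γ → R) : Prop :=
  ∀ a b c, f a b c * ∑ a', ∑ b', f a' b' c = (∑ b', f a b' c) * ∑ a', f a' b c

theorem TableIndep.symm [Fintype β] [CommSemiring R] {f : α → β → R} (h : TableIndep f) :
    TableIndep fun b a => f a b :=
  fun b a => (h a b).trans (mul_comm _ _)

theorem TableIndep.decomposition [Fintype β] [Fintype γ] [CommSemiring R] {f : α → β × γ → R}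
    (h : TableIndep f) : TableIndep fun a b => ∑ c, f a (b, c) := by
  intro a b
  calc ∑ c, f a (b, c) = ∑ c, (∑ x, f a x) * ∑ a', f a' (b, c) :=
        sum_congr rfl fun c _ => h a (b, c)
    _ = (∑ b', ∑ c, f a (b', c)) * ∑ a', ∑ c, f a' (b, c) := by
        rw [← mul_sum, sum_comm, Fintype.sum_prod_type]

theorem TableIndep.weak_union [Fintype β] [Fintype γ] [CommSemiring R] {f : α → β → γ → R}
    (h : TableIndep fun a (x : β × γ) => f a x.1 x.2) : TableCondIndep f := by
  intro a b c
  have margin_AC : ∑ b', f a b' c =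
      (∑ x : β × γ, f a x.1 x.2) * ∑ a', ∑ b', f a' b' c := by
    rw [sum_comm, mul_sum]
    exact sum_congr rfl fun b' _ => h a (b', c)
  have joint : f a b c = (∑ x : β × γ, f a x.1 x.2) * ∑ a', f a' b c := h a (b, c)
  rw [margin_AC, joint]
  exact mul_right_comm _ _ _

theorem eq_zero_of_sum_sum_eq_zero [Fintype β] [AddCommMonoid R] [PartialOrder R]
    [IsOrderedAddMonoid R] {f : α → β → R} (hf : ∀ a b, 0 ≤ f a b)
    (h : ∑ a, ∑ b, f a b = 0) (a : α) (b : β) : f a b = 0 := by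
  rw [← Fintype.sum_prod_type', sum_eq_zero_iff_of_nonneg fun x _ => hf x.1 x.2] at h
  exact h (a, b) (mem_univ _)

theorem TableCondIndep.contraction [Fintype β] [Fintype γ] [CommSemiring R] [IsCancelMulZero R]
    [PartialOrder R] [IsOrderedAddMonoid R] {f : α → β → γ → R} (hf : ∀ a b c, 0 ≤ f a b c)
    (hAB : TableCondIndep f) (hAC : TableIndep fun a c => ∑ b, f a b c) :
    TableIndep fun a (x : β × γ) => f a x.1 x.2 := by
  rintro a ⟨b, c⟩
  have margin_A : ∑ x : β × γ, f a x.1 x.2 = ∑ c', ∑ b', f a b' c' :=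
    Fintype.sum_prod_type_right _
  rw [margin_A]
  rcases eq_or_ne (∑ a', ∑ b', f a' b' c) 0 with hc | hc
  · simp only [eq_zero_of_sum_sum_eq_zero (fun a b => hf a b c) hc, sum_const_zero, mul_zero]
  · refine mul_right_cancel₀ hc ?_
    calc f a b c * ∑ a', ∑ b', f a' b' c
        = (∑ b', f a b' c) * ∑ a', f a' b c := hAB a b c
      _ = ((∑ c', ∑ b', f a b' c') * ∑ a', ∑ b', f a' b' c) * ∑ a', f a' b c :=
          congrArg (· * _) (hAC a c)
      _ = ((∑ c', ∑ b', f a b' c') * ∑ a', f a' b c) * ∑ a', ∑ b', f a' b' c :=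
          mul_right_comm _ _ _

/-- The weight `w a c` is the conditional probability of `a` given `c`. -/
theorem TableCondIndep.exists_eq_mul_sum [Fintype β] [Semifield R] [PartialOrder R]
    [IsOrderedAddMonoid R] {f : α → β → γ → R} (hf : ∀ a b c, 0 ≤ f a b c)
    (h : TableCondIndep f) : ∃ w : α → γ → R, ∀ a b c, f a b c = w a c * ∑ a', f a' b c := by
  refine ⟨fun a c => (∑ b', f a b' c) / ∑ a', ∑ b', f a' b' c, fun a b c => ?_⟩
  rcases eq_or_ne (∑ a', ∑ b', f a' b' c) 0 with hc | hc
  · simp only [eq_zero_of_sum_sum_eq_zero (fun a b => hf a b c) hc, sum_const_zero, mul_zero]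
  · rw [div_mul_eq_mul_div, eq_div_iff hc, h a b c]

end Tables

section BinaryTables

variable {R : Type*} [CommRing R]

theorem det_fin_two_eq_zero_iff_mul_sum_eq (A : Matrix (Fin 2) (Fin 2) R) :
    A.det = 0 ↔ ∀ a b, A a b * ∑ a', ∑ b', A a' b' = (∑ b', A a b') * ∑ a', A a' b := by
  simp only [Matrix.det_fin_two, Fin.forall_fin_two, Fin.sum_univ_two]
  constructor
  · intro h
    refine ⟨⟨?_, ?_⟩, ?_, ?_⟩
    · linear_combination h
    · linear_combination -h
    · linear_combination -h
    · linear_combination h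
  · rintro ⟨⟨h, -⟩, -⟩
    linear_combination h

theorem tableIndep_of_det_eq_zero {A : Matrix (Fin 2) (Fin 2) R} (hA : ∑ a, ∑ b, A a b = 1)
    (hdet : A.det = 0) : TableIndep A := by
  intro a b
  rw [← (det_fin_two_eq_zero_iff_mul_sum_eq A).1 hdet a b, hA, mul_one]

theorem TableCondIndep.det_eq_zero {γ : Type*} {f : Fin 2 → Fin 2 → γ → R}
    (h : TableCondIndep f) (c : γ) : (Matrix.of fun a b => f a b c).det = 0 :=
  (det_fin_two_eq_zero_iff_mul_sum_eq _).2 fun a b => h a b c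

theorem det_eq_zero_or_of_forall_det_sum_smul_eq_zero [NoZeroDivisors R]
    (W : Matrix (Fin 2) (Fin 2) R) (Q : Fin 2 → Matrix (Fin 2) (Fin 2) R)
    (h : ∀ i, (∑ k, W i k • Q k).det = 0) :
    W.det = 0 ∨ W 0 0 * W 1 0 * (Q 0).det = W 0 1 * W 1 1 * (Q 1).det := by
  have h0 := h 0
  have h1 := h 1
  simp only [Matrix.det_fin_two, Fin.sum_univ_two, Matrix.add_apply, Matrix.smul_apply,
    smul_eq_mul] at h0 h1 ⊢
  rw [← sub_eq_zero (a := W 0 0 * W 1 0 * _), ← mul_eq_zero]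
  -- These multipliers cancel the terms bilinear in `Q 0` and `Q 1`.
  linear_combination W 1 0 * W 1 1 * h0 - W 0 0 * W 0 1 * h1

end BinaryTables

section FourVariables

/-- The marginal table of `(X2, X4, X1)`, in the order suited to statements `X2 ⊥ X4 | X1`. -/
def table241 (p : Fin 2 × Fin 2 × Fin 2 × Fin 2 → ℝ) (j l i : Fin 2) : ℝ :=
  ∑ k, p (i, j, k, l)

/-- The full table `p` regrouped as `(X1, (X2, X4), X3)`, in the order suited to statements
`X1 ⊥ (X2, X4) | X3`. -/
def table1243 (p : Fin 2 × Fin 2 × Fin 2 × Fin 2 → ℝ) (i : Fin 2) (jl : Fin 2 × Fin 2)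
    (k : Fin 2) : ℝ :=
  p (i, jl.1, k, jl.2)

/-- The marginal table of `(X1, X3)`, as a matrix. -/
def table13 (p : Fin 2 × Fin 2 × Fin 2 × Fin 2 → ℝ) : Matrix (Fin 2) (Fin 2) ℝ :=
  .of fun i k => ∑ jl, table1243 p i jl k

variable {p : Fin 2 × Fin 2 × Fin 2 × Fin 2 → ℝ}

theorem ci24g1_iff_tableCondIndep : CI24g1 p ↔ TableCondIndep (table241 p) := by
  have margin_12 (i j : Fin 2) : ∑ k, ∑ l', p (i, j, k, l') = ∑ l', ∑ k, p (i, j, k, l') :=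
    sum_comm
  simp only [CI24g1, margin_12]
  exact ⟨fun h j l i => h i j l, fun h i j l => h j l i⟩

theorem ci1g3_iff_tableCondIndep : CI1g3 p ↔ TableCondIndep (table1243 p) := by
  simp only [CI1g3, TableCondIndep, table1243, Fintype.sum_prod_type, Prod.forall]
  exact ⟨fun h i j l k => h i j k l, fun h i j k l => h i j l k⟩

theorem indep1_iff_tableIndep :
    Indep1 p ↔ TableIndep fun i (x : (Fin 2 × Fin 2) × Fin 2) => table1243 p i x.1 x.2 := by
  have margin_1 (i : Fin 2) : ∑ j, ∑ k, ∑ l, p (i, j, k, l) = ∑ j, ∑ l, ∑ k, p (i, j, k, l) :=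
    sum_congr rfl fun _ _ => sum_comm
  simp only [Indep1, TableIndep, table1243, Fintype.sum_prod_type, Prod.forall, margin_1]
  exact ⟨fun h i j l k => h i j k l, fun h i j k l => h i j l k⟩

theorem indep2_iff_tableIndep :
    Indep2 p ↔ TableIndep fun j (x : Fin 2 × Fin 2) => table241 p j x.1 x.2 := by
  have margin_2 (j : Fin 2) : ∑ i, ∑ k, ∑ l, p (i, j, k, l) = ∑ l, ∑ i, ∑ k, p (i, j, k, l) :=
    (sum_congr rfl fun _ _ => sum_comm).trans sum_comm
  simp only [Indep2, TableIndep, table241, Fintype.sum_prod_type, Prod.forall, margin_2]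
  exact ⟨fun h j l i => h i j l, fun h i j l => h j l i⟩

theorem Indep1.ci1g3 (h : Indep1 p) : CI1g3 p :=
  ci1g3_iff_tableCondIndep.2 (indep1_iff_tableIndep.1 h).weak_union

theorem Indep2.ci24g1 (h : Indep2 p) : CI24g1 p :=
  ci24g1_iff_tableCondIndep.2 (indep2_iff_tableIndep.1 h).weak_union

theorem CI1g3.indep1 (h : CI1g3 p) (hp0 : ∀ s, 0 ≤ p s)
    (h13 : TableIndep (table13 p)) : Indep1 p :=
  indep1_iff_tableIndep.2 <|
    (ci1g3_iff_tableCondIndep.1 h).contraction (fun _ _ _ => hp0 _) h13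

theorem CI24g1.indep2 (h : CI24g1 p) (hp0 : ∀ s, 0 ≤ p s) (hIndep1 : Indep1 p) :
    Indep2 p := by
  have h21 : TableIndep fun j i => ∑ l, table241 p j l i :=
    (indep1_iff_tableIndep.1 hIndep1).decomposition.decomposition.symm
  exact indep2_iff_tableIndep.2 <|
    (ci24g1_iff_tableCondIndep.1 h).contraction (fun _ _ _ => sum_nonneg fun _ _ => hp0 _) h21

section Factorization

variable {W : Matrix (Fin 2) (Fin 2) ℝ} {Q : Fin 2 → Matrix (Fin 2) (Fin 2) ℝ}

theorem CI24g1.det_sum_smul_eq_zero (h : CI24g1 p)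
    (hpWQ : ∀ i j k l, p (i, j, k, l) = W i k * Q k j l) (i : Fin 2) :
    (∑ k, W i k • Q k).det = 0 := by
  convert (ci24g1_iff_tableCondIndep.1 h).det_eq_zero i using 2
  ext j l
  simp only [Matrix.sum_apply, Matrix.smul_apply, smul_eq_mul, Matrix.of_apply, table241, hpWQ]

theorem tableIndep_table13_of_det_eq_zero (hp1 : ∑ s, p s = 1)
    (hpWQ : ∀ i j k l, p (i, j, k, l) = W i k * Q k j l) (hW : W.det = 0) :
    TableIndep (table13 p) := by
  refine tableIndep_of_det_eq_zero ?_ ?_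
  · simp only [← hp1, table13, Matrix.of_apply, table1243, Fintype.sum_prod_type]
    exact sum_congr rfl fun _ _ => sum_comm
  · have scaled_columns : table13 p = .of fun i k =>
        (∑ jl : Fin 2 × Fin 2, Q k jl.1 jl.2) * W i k := by
      ext i k
      simp only [table13, Matrix.of_apply, table1243, hpWQ, ← mul_sum, mul_comm]
    rw [scaled_columns, Matrix.det_mul_row, hW, mul_zero]

theorem eq64_and_eq65_of_det_eq (hpWQ : ∀ i j k l, p (i, j, k, l) = W i k * Q k j l)
    (hdet : W 0 0 * W 1 0 * (Q 0).det = W 0 1 * W 1 1 * (Q 1).det) : Eq64 p ∧ Eq65 p := by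
  simp only [Matrix.det_fin_two] at hdet
  simp only [Eq64, Eq65, hpWQ]
  constructor
  · linear_combination -hdet
  · linear_combination hdet

end Factorization

theorem tableIndep_table13_or_eq64_and_eq65 (hp0 : ∀ s, 0 ≤ p s) (hp1 : ∑ s, p s = 1)
    (h24 : CI24g1 p) (h1 : CI1g3 p) :
    TableIndep (table13 p) ∨ Eq64 p ∧ Eq65 p := by
  obtain ⟨w, hw⟩ :=
    (ci1g3_iff_tableCondIndep.1 h1).exists_eq_mul_sum fun _ _ _ => hp0 _
  let Q (k : Fin 2) : Matrix (Fin 2) (Fin 2) ℝ := .of fun j l => ∑ i, p (i, j, k, l)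
  have hpWQ (i j k l : Fin 2) : p (i, j, k, l) = Matrix.of w i k * Q k j l := hw i (j, l) k
  exact (det_eq_zero_or_of_forall_det_sum_smul_eq_zero (.of w) Q
    (h24.det_sum_smul_eq_zero hpWQ)).imp
    (tableIndep_table13_of_det_eq_zero hp1 hpWQ) (eq64_and_eq65_of_det_eq hpWQ)

end FourVariables

theorem prop17_general (p : Fin 2 × Fin 2 × Fin 2 × Fin 2 → ℝ)
    (hp0 : ∀ s, 0 ≤ p s) (hp1 : ∑ s, p s = 1) :
    (CI24g1 p ∧ CI1g3 p)
    ↔ ((Indep1 p ∧ Indep2 p) ∨ (CI24g1 p ∧ CI1g3 p ∧ Eq64 p ∧ Eq65 p)) := by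
  constructor
  · rintro ⟨h24, h1⟩
    rcases tableIndep_table13_or_eq64_and_eq65 hp0 hp1 h24 h1 with h13 | ⟨h64, h65⟩
    · have hIndep1 : Indep1 p := h1.indep1 hp0 h13
      exact .inl ⟨hIndep1, h24.indep2 hp0 hIndep1⟩
    · exact .inr ⟨h24, h1, h64, h65⟩
  · rintro (⟨hIndep1, hIndep2⟩ | ⟨h24, h1, -, -⟩)
    · exact ⟨hIndep2.ci24g1, hIndep1.ci1g3⟩
    · exact ⟨h24, h1⟩

/-- Proposition 17: for a strictly positive pmf `p` on `{1,2}⁴`, the two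
conditional independences `X2 ⊥ X4 | X1` and `X1 ⊥ (X2, X4) | X3` hold if and only if
(i) `X1 ⊥ (X2, X3, X4)` and `X2 ⊥ (X1, X4)`, or
(ii) `X2 ⊥ X4 | X1`, `X1 ⊥ (X2, X4) | X3` and equations (6.4) and (6.5) hold. -/
theorem prop17 (p : Fin 2 × Fin 2 × Fin 2 × Fin 2 → ℝ)
    (hp0 : ∀ s, 0 < p s) (hp1 : ∑ s, p s = 1) :
    (CI24g1 p ∧ CI1g3 p)
    ↔ ((Indep1 p ∧ Indep2 p) ∨ (CI24g1 p ∧ CI1g3 p ∧ Eq64 p ∧ Eq65 p)) :=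
  prop17_general p (fun s => (hp0 s).le) hp1

end
end

section
/- Let A_1, A_2, A_3, A_4 be finite nonempty types and let p be a pmf on A_1 × A_2 × A_3 × A_4 (a random vector (X1, X2, X3, X4)). If X1 ⊥ (X2,X3,X4) and X2 ⊥ (X1,X4), then X2 ⊥ X4 | X1 and X1 ⊥ (X2,X4) | X3. (The easy direction of Proposition 17: condition (i) implies membership in the type III model for the chain graph with edges 1 → 3, 2 − 3, 3 − 4.) -/
/-!
Both conclusions are instances of weak union, `X ⊥ (Y, Z) → X ⊥ Y | Z`: take
`(X, Y, Z) = (X2, X4, X1)` for the first and `(X, Y, Z) = (X1, (X2, X4), X3)` for the second.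
Weak union follows from the decomposition `X ⊥ Z`: multiplying `p(x, y, z) = p(x) p(y, z)` by `p(z)`
gives `p(x, y, z) p(z) = p(x) p(z) p(y, z) = p(x, z) p(y, z)`.
Neither positivity nor division enters, so the masses may lie in any commutative semiring.
-/

section GraphoidAxioms

variable {R α β γ : Type*} [CommSemiring R] [Fintype α] [Fintype β]

/-- Independence `X ⊥ Y` of the two coordinates of the joint mass function `q` of `(X, Y)`.
The masses lie in a commutative semiring and are not required to sum to `1`. -/
def IndepMass (q : α → β → R) : Prop :=
  ∀ a b, q a b = (∑ b', q a b') * ∑ a', q a' b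

/-- Conditional independence `X ⊥ Y | Z` for the joint mass function `q` of `(X, Y, Z)`, in the
division-free form `p(x, y, z) p(z) = p(x, z) p(y, z)`, so that `p(z) = 0` is allowed. -/
def CondIndepMass (q : α → β → γ → R) : Prop :=
  ∀ a b c, q a b c * ∑ a', ∑ b', q a' b' c = (∑ b', q a b' c) * ∑ a', q a' b c

variable [Fintype γ] {q : α → β → γ → R}

theorem IndepMass.decomposition (h : IndepMass fun a (y : β × γ) ↦ q a y.1 y.2) :
    IndepMass fun a c ↦ ∑ b, q a b c := by
  intro a c
  calc ∑ b, q a b c = ∑ b, (∑ y : β × γ, q a y.1 y.2) * ∑ a', q a' b c :=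
        Finset.sum_congr rfl fun b _ ↦ h a (b, c)
    _ = (∑ c', ∑ b, q a b c') * ∑ a', ∑ b, q a' b c := by
        rw [← Finset.mul_sum, Fintype.sum_prod_type_right,
          Finset.sum_comm (f := fun b a' ↦ q a' b c)]

theorem IndepMass.weak_union (h : IndepMass fun a (y : β × γ) ↦ q a y.1 y.2) :
    CondIndepMass q := by
  intro a b c
  have joint : q a b c = (∑ c', ∑ b', q a b' c') * ∑ a', q a' b c := by
    simpa only [Fintype.sum_prod_type_right] using h a (b, c)
  calc q a b c * ∑ a', ∑ b', q a' b' c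
      = ((∑ c', ∑ b', q a b' c') * ∑ a', ∑ b', q a' b' c) * ∑ a', q a' b c := by
        rw [joint, mul_right_comm]
    _ = (∑ b', q a b' c) * ∑ a', q a' b c := by
        rw [← h.decomposition a c]

end GraphoidAxioms

theorem prop17_easy_direction_general
    {R A1 A2 A3 A4 : Type*} [CommSemiring R] [Fintype A1] [Fintype A2] [Fintype A3] [Fintype A4]
    (p : A1 × A2 × A3 × A4 → R)
    (h1 : ∀ i j k l, p (i, j, k, l)
      = (∑ j', ∑ k', ∑ l', p (i, j', k', l')) * (∑ i', p (i', j, k, l)))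
    (h2 : ∀ i j l, (∑ k, p (i, j, k, l))
      = (∑ i', ∑ k, ∑ l', p (i', j, k, l')) * (∑ j', ∑ k, p (i, j', k, l))) :
    (∀ i j l, (∑ k, p (i, j, k, l)) * (∑ j', ∑ k, ∑ l', p (i, j', k, l'))
      = (∑ k, ∑ l', p (i, j, k, l')) * (∑ j', ∑ k, p (i, j', k, l)))
    ∧ (∀ i j k l, p (i, j, k, l) * (∑ i', ∑ j', ∑ l', p (i', j', k, l'))
      = (∑ j', ∑ l', p (i, j', k, l')) * (∑ i', p (i', j, k, l))) := by
  have sum_k_l (i : A1) (j : A2) : ∑ l, ∑ k, p (i, j, k, l) = ∑ k, ∑ l, p (i, j, k, l) :=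
    Finset.sum_comm
  have indep₂ : IndepMass fun j (y : A4 × A1) ↦ ∑ k, p (y.2, j, k, y.1) := by
    rintro j ⟨l, i⟩
    simpa only [Fintype.sum_prod_type_right, sum_k_l] using h2 i j l
  have indep₁ : IndepMass fun i (y : (A2 × A4) × A3) ↦ p (i, y.1.1, y.2, y.1.2) := by
    rintro i ⟨⟨j, l⟩, k⟩
    simpa only [Fintype.sum_prod_type, sum_k_l] using h1 i j k l
  constructor
  · intro i j l
    simpa only [sum_k_l] using
      IndepMass.weak_union (q := fun j l i ↦ ∑ k, p (i, j, k, l)) indep₂ j l i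
  · intro i j k l
    simpa only [Fintype.sum_prod_type] using
      IndepMass.weak_union (q := fun i (y : A2 × A4) k ↦ p (i, y.1, k, y.2)) indep₁ i (j, l) k

/-- easy direction of Proposition 17: for a pmf `p` on
`A₁ × A₂ × A₃ × A₄`, if `X1 ⊥ (X2, X3, X4)` and `X2 ⊥ (X1, X4)`, then
`X2 ⊥ X4 | X1` and `X1 ⊥ (X2, X4) | X3`. -/
theorem prop17_easy_direction
    {A1 A2 A3 A4 : Type*} [Fintype A1] [Fintype A2] [Fintype A3] [Fintype A4]
    [Nonempty A1] [Nonempty A2] [Nonempty A3] [Nonempty A4]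
    (p : A1 × A2 × A3 × A4 → ℝ)
    (hp0 : ∀ s, 0 ≤ p s) (hp1 : ∑ s, p s = 1)
    -- X1 ⊥ (X2, X3, X4) : p(i,j,k,l) = p₁(i) · p₂₃₄(j,k,l)
    (h1 : ∀ i j k l, p (i, j, k, l)
      = (∑ j', ∑ k', ∑ l', p (i, j', k', l')) * (∑ i', p (i', j, k, l)))
    -- X2 ⊥ (X1, X4) : p₁₂₄(i,j,l) = p₂(j) · p₁₄(i,l)
    (h2 : ∀ i j l, (∑ k, p (i, j, k, l))
      = (∑ i', ∑ k, ∑ l', p (i', j, k, l')) * (∑ j', ∑ k, p (i, j', k, l))) :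
    -- X2 ⊥ X4 | X1 : p₁₂₄(i,j,l) · p₁(i) = p₁₂(i,j) · p₁₄(i,l)
    (∀ i j l, (∑ k, p (i, j, k, l)) * (∑ j', ∑ k, ∑ l', p (i, j', k, l'))
      = (∑ k, ∑ l', p (i, j, k, l')) * (∑ j', ∑ k, p (i, j', k, l)))
    -- and X1 ⊥ (X2, X4) | X3 : p(i,j,k,l) · p₃(k) = p₁₃(i,k) · p₂₃₄(j,k,l)
    ∧ (∀ i j k l, p (i, j, k, l) * (∑ i', ∑ j', ∑ l', p (i', j', k, l'))
      = (∑ j', ∑ l', p (i, j', k, l')) * (∑ i', p (i', j, k, l))) :=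
  prop17_easy_direction_general p h1 h2
end
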